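/- Assume all three of: (B1) ψ*(0)^{1/2} < ψ^{1/2}·‖Π_{W⊥}(G)‖_P; (B2) either ∂₁F_κ(ζ,0) > 0 or ∂₂F_κ(ζ,0) < ‖∂₁F_κ(ζ,0)·(1 − ζ²X^{−1})·W + ψ^{1/2}·Π_{W⊥}(G)‖_P; (B3) either ∂₁F_κ(−ζ,0) < 0 or ∂₂F_κ(−ζ,0) < ‖∂₁F_κ(−ζ,0)·(1 − ζ²X^{−1})·W + ψ^{1/2}·Π_{W⊥}(G)‖_P. Then the system of three equations −c₁ = E_P[(ψ^{1/2}Π_{W⊥}(G) + A·W)·W·X^{1/2}/D], c₁² + c₂² = E_P[(ψ^{1/2}Π_{W⊥}(G) + A·W)²·X/D²], and 1 = E_P[(ψ^{1/2}Π_{W⊥}(G) + A·W)²/D²] — where A = ∂₁F_κ(c₁,c₂) − c₁c₂^{−1}∂₂F_κ(c₁,c₂) and D = c₂^{−1}∂₂F_κ(c₁,c₂)·X^{1/2} + ψ^{1/2}·s·X^{−1/2} — admits a unique solution (c₁,c₂,s) ∈ ℝ × (0,∞) × (0,∞). -/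

import Mathlib

open MeasureTheory ProbabilityTheory Real Filter Set Topology

noncomputable section

namespace MaxMargin

/-- The standard Gaussian measure on `ℝ`. -/
def stdG : Measure ℝ := gaussianReal 0 1

/-- The function `F_κ(c₁,c₂) = (E[((κ − c₁·Y·G − c₂·Z)₊)²])^{1/2}` where `G, Z` are independent
standard Gaussians and, conditionally on `G`, `Y ∈ {+1,−1}` with `P(Y = +1 | G) = f(G)`. -/
def Fk (f : ℝ → ℝ) (κ c₁ c₂ : ℝ) : ℝ :=
  Real.sqrt (∫ g, ∫ z,
    (f g * (max (κ - c₁ * g - c₂ * z) 0) ^ 2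
      + (1 - f g) * (max (κ + c₁ * g - c₂ * z) 0) ^ 2) ∂stdG ∂stdG)

/-- Non-degeneracy of `f`: the variable `T = Y·G` satisfies `P(T < x) > 0` and `P(T > x) > 0`
for every `x ∈ ℝ`. -/
def NonDeg (f : ℝ → ℝ) : Prop :=
  ∀ x : ℝ,
    (0 < ∫ g, (f g * (if g < x then (1:ℝ) else 0)
          + (1 - f g) * (if -g < x then (1:ℝ) else 0)) ∂stdG) ∧
    (0 < ∫ g, (f g * (if x < g then (1:ℝ) else 0)
          + (1 - f g) * (if x < -g then (1:ℝ) else 0)) ∂stdG)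


/-- Points of `ℝ³` carrying the coordinates `(G, X, W)`. -/
abbrev Pt : Type := ℝ × ℝ × ℝ

/-- First coordinate `G`. -/
def Gc : Pt → ℝ := fun q => q.1

/-- Second coordinate `X`. -/
def Xc : Pt → ℝ := fun q => q.2.1

/-- Third coordinate `W`. -/
def Wc : Pt → ℝ := fun q => q.2.2

/-- The inner product `⟨h₁,h₂⟩_P = E_P[h₁h₂]`. -/
def ip (P : Measure Pt) (h₁ h₂ : Pt → ℝ) : ℝ := ∫ q, h₁ q * h₂ q ∂P

/-- The norm `‖h‖_P = ⟨h,h⟩_P^{1/2}`. -/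
def pnorm (P : Measure Pt) (h : Pt → ℝ) : ℝ := Real.sqrt (ip P h h)

/-- Projection onto the orthogonal complement of `W`: `Π_{W⊥}(h) = h − ⟨h,W⟩_P·W`. -/
def projW (P : Measure Pt) (h : Pt → ℝ) : Pt → ℝ := fun q => h q - ip P h Wc * Wc q

/-- Partial derivative of `F_κ` in its first argument. -/
def d1F (f : ℝ → ℝ) (κ c₁ c₂ : ℝ) : ℝ := deriv (fun t => Fk f κ t c₂) c₁

/-- Partial derivative of `F_κ` in its second argument. -/
def d2F (f : ℝ → ℝ) (κ c₁ c₂ : ℝ) : ℝ := deriv (fun t => Fk f κ c₁ t) c₂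

/-- `ψ*(0) = min_{c ∈ ℝ} F₀(c,1)²`. -/
def psiStar0 (f : ℝ → ℝ) : ℝ := ⨅ c : ℝ, (Fk f 0 c 1) ^ 2

/-- The functional `𝓡_{ψ,κ,P}(h) = ψ^{−1/2}·F_κ(⟨h, X^{1/2}W⟩_P, ‖Π_{W⊥}(X^{1/2}h)‖_P)
+ ⟨h, X^{1/2}·Π_{W⊥}(G)⟩_P`. -/
def Rfun (f : ℝ → ℝ) (P : Measure Pt) (ψ κ : ℝ) (h : Pt → ℝ) : ℝ :=
  (Real.sqrt ψ)⁻¹ *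
      Fk f κ (ip P h (fun q => Real.sqrt (Xc q) * Wc q))
        (pnorm P (projW P (fun q => Real.sqrt (Xc q) * h q)))
    + ip P h (fun q => Real.sqrt (Xc q) * projW P Gc q)

/-- `ζ(P) = ‖X^{−1/2}W‖_P^{−1}`. -/
def zetaP (P : Measure Pt) : ℝ := (pnorm P (fun q => (Real.sqrt (Xc q))⁻¹ * Wc q))⁻¹

/-- The system of equations (for the measure `P` on `ℝ³`, with `Π_{W⊥}(G)`):
with `A = ∂₁F_κ(c₁,c₂) − c₁c₂⁻¹∂₂F_κ(c₁,c₂)` and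
`D = c₂⁻¹∂₂F_κ(c₁,c₂)·X^{1/2} + ψ^{1/2}·s·X^{−1/2}`,
`−c₁ = E_P[(ψ^{1/2}Π_{W⊥}(G) + A·W)·W·X^{1/2}/D]`,
`c₁² + c₂² = E_P[(ψ^{1/2}Π_{W⊥}(G) + A·W)²·X/D²]`,
`1 = E_P[(ψ^{1/2}Π_{W⊥}(G) + A·W)²/D²]`. -/
def SolSys (f : ℝ → ℝ) (P : Measure Pt) (ψ κ c₁ c₂ s : ℝ) : Prop :=
  (-c₁ = ∫ q, (Real.sqrt ψ * projW P Gc q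
        + (d1F f κ c₁ c₂ - c₁ * c₂⁻¹ * d2F f κ c₁ c₂) * Wc q) * Wc q * Real.sqrt (Xc q)
      / (c₂⁻¹ * d2F f κ c₁ c₂ * Real.sqrt (Xc q)
          + Real.sqrt ψ * s * (Real.sqrt (Xc q))⁻¹) ∂P)
  ∧ (c₁ ^ 2 + c₂ ^ 2 = ∫ q, (Real.sqrt ψ * projW P Gc q
        + (d1F f κ c₁ c₂ - c₁ * c₂⁻¹ * d2F f κ c₁ c₂) * Wc q) ^ 2 * Xc q
      / (c₂⁻¹ * d2F f κ c₁ c₂ * Real.sqrt (Xc q)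
          + Real.sqrt ψ * s * (Real.sqrt (Xc q))⁻¹) ^ 2 ∂P)
  ∧ (1 = ∫ q, (Real.sqrt ψ * projW P Gc q
        + (d1F f κ c₁ c₂ - c₁ * c₂⁻¹ * d2F f κ c₁ c₂) * Wc q) ^ 2
      / (c₂⁻¹ * d2F f κ c₁ c₂ * Real.sqrt (Xc q)
          + Real.sqrt ψ * s * (Real.sqrt (Xc q))⁻¹) ^ 2 ∂P)

/-- Condition (B1). -/
def CondB1 (f : ℝ → ℝ) (P : Measure Pt) (ψ : ℝ) : Prop :=
  Real.sqrt (psiStar0 f) < Real.sqrt ψ * pnorm P (projW P Gc)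

/-- Condition (B2). -/
def CondB2 (f : ℝ → ℝ) (P : Measure Pt) (ψ κ : ℝ) : Prop :=
  0 < d1F f κ (zetaP P) 0 ∨
    d2F f κ (zetaP P) 0 <
      pnorm P (fun q => d1F f κ (zetaP P) 0 * (1 - (zetaP P) ^ 2 * (Xc q)⁻¹) * Wc q
        + Real.sqrt ψ * projW P Gc q)

/-- Condition (B3). -/
def CondB3 (f : ℝ → ℝ) (P : Measure Pt) (ψ κ : ℝ) : Prop :=
  d1F f κ (-(zetaP P)) 0 < 0 ∨
    d2F f κ (-(zetaP P)) 0 <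
      pnorm P (fun q => d1F f κ (-(zetaP P)) 0 * (1 - (zetaP P) ^ 2 * (Xc q)⁻¹) * Wc q
        + Real.sqrt ψ * projW P Gc q)

/-!
For `h` in `L²(P)` consider the functional `h ↦ F_κ(⟪w, S h⟫, ‖Π_{w⊥} (S h)‖) + ⟪Γ, S h⟫`, where `w`
is the class of `W`, `Γ = ψ^{1/2}·Π_{W⊥}(G)` and `S` multiplies by `X^{1/2}`. Solving pointwise for
`h` shows that the system of equations is the Lagrange condition, with multiplier `ψ^{1/2}·s`, for
minimising this functional over the unit sphere, with `c₁ = ⟪w, S h⟫` and `c₂ = ‖Π_{w⊥} (S h)‖`.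

`F_κ` is the `L²`-norm of the positive part of an affine function of `(c₁, c₂)`. It is convex, it is
differentiable because that positive part does not vanish for `κ > 0`, and it is even in `c₂`; hence
the functional is convex and differentiable, also where `c₂ = 0`. By weak compactness it attains its
minimum over the unit ball. By (B1) it is unbounded below, so its gradient is nonzero at the
minimiser, which therefore lies on the sphere and has a positive multiplier. Adding the subgradient
inequalities of two critical points with positive multipliers shows that they coincide. Finally, a
critical point with `c₂ = 0` is a multiple of `X^{-1/2}·W`, so that `c₁ = ±ζ`, and this is what (B2)
and (B3) exclude.
-/

open scoped RealInnerProductSpace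

/-! ### Convex functions and critical points on the unit sphere -/

section Convex

variable {E : Type*} [NormedAddCommGroup E] [NormedSpace ℝ E]

lemma hasFDerivAt_of_le_of_le {f g h : E → ℝ} {L : E →L[ℝ] ℝ} {x : E}
    (hfg : ∀ y, f y ≤ g y) (hgh : ∀ y, g y ≤ h y) (hfx : f x = g x) (hhx : h x = g x)
    (hf : HasFDerivAt f L x) (hh : HasFDerivAt h L x) : HasFDerivAt g L x := by
  rw [hasFDerivAt_iff_isLittleO] at hf hh ⊢
  refine (Asymptotics.IsBigO.of_bound 1 (Eventually.of_forall fun y => ?_)).trans_isLittleO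
    (hf.norm_left.add hh.norm_left)
  simp only [norm_eq_abs, one_mul]
  rw [abs_of_nonneg (a := |_| + |_|) (by positivity), abs_le]
  have hlow := neg_abs_le (f y - f x - L (y - x))
  have hup := le_abs_self (h y - h x - L (y - x))
  have hf0 := abs_nonneg (f y - f x - L (y - x))
  have hh0 := abs_nonneg (h y - h x - L (y - x))
  constructor <;> linarith [hfg y, hgh y]

lemma hasFDerivAt_of_convexOn_of_le {f h : E → ℝ} {L : E →L[ℝ] ℝ} {x : E}
    (hf : ConvexOn ℝ univ f) (hfh : ∀ y, f y ≤ h y) (hx : f x = h x)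
    (hh : HasFDerivAt h L x) : HasFDerivAt f L x := by
  have hrefl : HasFDerivAt (fun y => 2 * h x - h (x + x - y)) L x := by
    have hpt : HasFDerivAt h L (x + x - x) := by rwa [add_sub_cancel_right]
    exact ((hasFDerivAt_const (2 * h x) x).sub (hpt.comp x ((hasFDerivAt_id x).const_sub (x + x)))
      ).congr_fderiv (by ext; simp)
  refine hasFDerivAt_of_le_of_le (fun y => ?_) hfh (by simp [hx, two_mul]) hx.symm hrefl hh
  have hhalf : (0 : ℝ) ≤ 2⁻¹ := by norm_num
  have hmid := hf.2 (mem_univ y) (mem_univ (x + x - y)) hhalf hhalf (by norm_num)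
  rw [← smul_add, add_sub_cancel, ← two_smul ℝ x, smul_smul, inv_mul_cancel₀ two_ne_zero, one_smul,
    hx] at hmid
  simp only [smul_eq_mul, two_smul] at hmid
  linarith [hfh (x + x - y)]

lemma add_fderiv_le_of_convexOn {Φ : E → ℝ} {L : E →L[ℝ] ℝ} {x : E}
    (hΦ : ConvexOn ℝ univ Φ) (hL : HasFDerivAt Φ L x) (y : E) : Φ x + L (y - x) ≤ Φ y := by
  have hline : ConvexOn ℝ univ (Φ ∘ AffineMap.lineMap (k := ℝ) x y) :=
    hΦ.comp_affineMap (AffineMap.lineMap x y)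
  have hderiv : HasDerivAt (Φ ∘ AffineMap.lineMap (k := ℝ) x y) (L (y - x)) 0 := by
    have hL' : HasFDerivAt Φ L (AffineMap.lineMap x y (0 : ℝ)) := by simpa using hL
    exact hL'.comp_hasDerivAt 0 AffineMap.hasDerivAt_lineMap
  have hslope := hline.le_slope_of_hasDerivAt (mem_univ 0) (mem_univ 1) one_pos hderiv
  simp only [slope_def_field, Function.comp_apply, AffineMap.lineMap_apply_one,
    AffineMap.lineMap_apply_zero, sub_zero, div_one] at hslope
  linarith

lemma monotoneOn_Ici_of_convexOn_of_even {g : ℝ → ℝ} (hg : ConvexOn ℝ univ g)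
    (heven : g.Even) : MonotoneOn g (Ici 0) := fun x hx y _ hxy => by
  have hmax := hg.le_max_of_mem_Icc (mem_univ (-y)) (mem_univ y)
    (z := x) ⟨by linarith [mem_Ici.1 hx], hxy⟩
  rwa [heven y, max_self] at hmax

lemma deriv_zero_of_even {g : ℝ → ℝ} (heven : g.Even) : deriv g 0 = 0 := by
  have hneg : deriv g 0 = -deriv g 0 := by
    conv_lhs => rw [← funext heven, deriv_comp_neg, neg_zero]
  linarith

lemma deriv_nonneg_of_convexOn_of_even {g : ℝ → ℝ} (hg : ConvexOn ℝ univ g)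
    (hdiff : Differentiable ℝ g) (heven : g.Even) {c : ℝ} (hc : 0 ≤ c) : 0 ≤ deriv g c := by
  rw [← deriv_zero_of_even heven]
  exact hg.monotoneOn_deriv (fun x _ => hdiff x) (mem_univ 0) (mem_univ c) hc

end Convex

section SphereCritical

open Metric

variable {H : Type*} [NormedAddCommGroup H] [InnerProductSpace ℝ H]

/-- Lagrange condition for minimising a function with gradient field `g` over the unit sphere of a
Hilbert space, with a positive multiplier `σ`. -/
def IsSphereCritical (g : H → H) (h : H) (σ : ℝ) : Prop :=
  ‖h‖ = 1 ∧ 0 < σ ∧ g h + σ • h = 0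

lemma eq_of_isSphereCritical {Φ : H → ℝ} {g : H → H}
    (hg : ∀ x y, Φ x + ⟪g x, y - x⟫ ≤ Φ y) {h h' : H} {σ σ' : ℝ}
    (hh : IsSphereCritical g h σ) (hh' : IsSphereCritical g h' σ') : h = h' ∧ σ = σ' := by
  have lower : ∀ {u v : H} {τ : ℝ}, IsSphereCritical g u τ →
      Φ u + τ * (1 - ⟪u, v⟫) ≤ Φ v := fun {u v τ} ⟨hu, _, hgu⟩ => by
    have hsub := hg u v
    rwa [eq_neg_of_add_eq_zero_left hgu, inner_neg_left, inner_smul_left, inner_sub_right,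
      real_inner_self_eq_norm_sq, hu, conj_trivial, ← mul_neg, neg_sub, one_pow] at hsub
  have hle : 1 ≤ ⟪h, h'⟫ := by
    have h₁ := lower (v := h') hh
    have h₂ := lower (v := h) hh'
    rw [real_inner_comm] at h₂
    have hsum : (σ + σ') * (1 - ⟪h, h'⟫) ≤ 0 := by linarith
    exact sub_nonpos.1 (nonpos_of_mul_nonpos_right hsum (add_pos hh.2.1 hh'.2.1))
  have heq : h = h' := (inner_eq_one_iff_of_norm_eq_one hh.1 hh'.1).1 <|
    le_antisymm (by simpa [hh.1, hh'.1] using real_inner_le_norm h h') hle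
  subst heq
  refine ⟨rfl, smul_left_injective ℝ (norm_ne_zero_iff.1 (hh.1 ▸ one_ne_zero)) ?_⟩
  exact add_left_cancel (hh.2.2.trans hh'.2.2.symm)

variable [CompleteSpace H]

-- Closed balls are weakly compact and `Φ`, a supremum of affine functions, is weakly lower
-- semicontinuous.
lemma exists_isMinOn_closedBall {Φ : H → ℝ} {g : H → H}
    (hg : ∀ x y, Φ x + ⟪g x, y - x⟫ ≤ Φ y) {r : ℝ} (hr : 0 ≤ r) :
    ∃ h ∈ closedBall (0 : H) r, IsMinOn Φ (closedBall 0 r) h := by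
  let e : H ≃ₗᵢ⋆[ℝ] StrongDual ℝ H := InnerProductSpace.toDual ℝ H
  let Ψ : WeakDual ℝ H → ℝ := fun ℓ => Φ (e.symm (WeakDual.toStrongDual ℓ))
  let B : Set (WeakDual ℝ H) := WeakDual.toStrongDual ⁻¹' closedBall 0 r
  have hlsc : LowerSemicontinuous Ψ := fun ℓ c hc => by
    let x := e.symm (WeakDual.toStrongDual ℓ)
    have hcont : Continuous fun ℓ' : WeakDual ℝ H => Φ x + (ℓ' (g x) - ⟪g x, x⟫) :=
      continuous_const.add ((WeakDual.eval_continuous (g x)).sub continuous_const)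
    have haffine : ∀ ℓ' : WeakDual ℝ H, Φ x + (ℓ' (g x) - ⟪g x, x⟫) ≤ Ψ ℓ' := fun ℓ' => by
      have hsub := hg x (e.symm (WeakDual.toStrongDual ℓ'))
      rwa [inner_sub_right, real_inner_comm, InnerProductSpace.toDual_symm_apply] at hsub
    have hx : ℓ (g x) = ⟪g x, x⟫ := by
      rw [real_inner_comm, InnerProductSpace.toDual_symm_apply]; rfl
    have hc' : c < Φ x + (ℓ (g x) - ⟪g x, x⟫) := by rw [hx, sub_self, add_zero]; exact hc
    exact (hcont.continuousAt.eventually_const_lt hc').mono fun ℓ' hℓ' =>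
      hℓ'.trans_le (haffine ℓ')
  obtain ⟨ℓ, hℓ, hmin⟩ := (hlsc.lowerSemicontinuousOn B).exists_isMinOn ⟨0, by simpa [B] using hr⟩
    (WeakDual.isCompact_closedBall 0 r)
  refine ⟨e.symm (WeakDual.toStrongDual ℓ), by simpa [B] using hℓ, fun y hy => ?_⟩
  simpa [Ψ] using hmin (a := (e y).toWeakDual) (by simpa [B] using hy)

lemma isSphereCritical_of_isMinOn_closedBall {Φ : H → ℝ} {g : H → H} {h : H}
    (hgrad : HasGradientAt Φ (g h) h) (hh : h ∈ closedBall (0 : H) 1)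
    (hmin : IsMinOn Φ (closedBall 0 1) h) (hne : g h ≠ 0) : IsSphereCritical g h ‖g h‖ := by
  rw [mem_closedBall_zero_iff] at hh
  set u := -NormedSpace.normalize (g h) with hu
  have hunorm : ‖u‖ = 1 := by rw [hu, norm_neg, NormedSpace.norm_normalize hne]
  have hgu : g h = -(‖g h‖ • u) := by rw [hu, smul_neg, neg_neg, NormedSpace.norm_smul_normalize]
  have hvar : 0 ≤ ⟪g h, u - h⟫ := by
    have hseg : segment ℝ h u ⊆ closedBall 0 1 :=
      (convex_closedBall 0 1).segment_subset (by simpa using hh) (by simp [hunorm])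
    simpa using hmin.localize.hasFDerivWithinAt_nonneg hgrad.hasFDerivAt.hasFDerivWithinAt
      (sub_mem_posTangentConeAt_of_segment_subset hseg)
  have hinner : 1 ≤ ⟪u, h⟫ := by
    rw [hgu, inner_neg_left, real_inner_smul_left, inner_sub_right, real_inner_self_eq_norm_sq,
      hunorm] at hvar
    nlinarith [norm_pos_iff.2 hne]
  have hdist : ‖u - h‖ ^ 2 ≤ 0 := by
    rw [norm_sub_sq_real, hunorm]
    nlinarith [norm_nonneg h]
  have heq : u = h := sub_eq_zero.1 (norm_eq_zero.1 (by nlinarith [norm_nonneg (u - h)]))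
  exact ⟨heq ▸ hunorm, norm_pos_iff.2 hne, eq_neg_iff_add_eq_zero.1 (heq ▸ hgu)⟩

theorem existsUnique_isSphereCritical {Φ : H → ℝ} {g : H → H} (hΦ : ConvexOn ℝ univ Φ)
    (hg : ∀ x, HasGradientAt Φ (g x) x) (hunbdd : ¬BddBelow (range Φ)) :
    ∃! p : H × ℝ, IsSphereCritical g p.1 p.2 := by
  have hsub : ∀ x y, Φ x + ⟪g x, y - x⟫ ≤ Φ y := fun x y => by
    simpa using add_fderiv_le_of_convexOn hΦ (hg x).hasFDerivAt y
  obtain ⟨h, hmem, hmin⟩ := exists_isMinOn_closedBall hsub zero_le_one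
  have hne : g h ≠ 0 := fun h0 => hunbdd ⟨Φ h, by
    rintro _ ⟨y, rfl⟩
    simpa [h0] using hsub h y⟩
  have hcrit := isSphereCritical_of_isMinOn_closedBall (hg h) hmem hmin hne
  exact ⟨(h, ‖g h‖), hcrit, fun p hp => Prod.ext_iff.2 (eq_of_isSphereCritical hsub hp hcrit)⟩

end SphereCritical

/-! ### Convex profiles of an axial component and a perpendicular norm -/

section Profile

/-- The partial derivative of `F : ℝ → ℝ → ℝ` in its first argument. -/
def partialFst (F : ℝ → ℝ → ℝ) (c₁ c₂ : ℝ) : ℝ := deriv (fun t => F t c₂) c₁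

/-- The partial derivative of `F : ℝ → ℝ → ℝ` in its second argument. -/
def partialSnd (F : ℝ → ℝ → ℝ) (c₁ c₂ : ℝ) : ℝ := deriv (fun t => F c₁ t) c₂

/-- The properties of `(c₁, c₂) ↦ F_κ(c₁, c₂)` that make `x ↦ F ⟪w, x⟫ ‖Π_{w⊥} x‖` convex and
differentiable, including at the points where `Π_{w⊥} x = 0`. -/
structure IsConvexProfile (F : ℝ → ℝ → ℝ) : Prop where
  convexOn : ConvexOn ℝ univ (Function.uncurry F)
  differentiable : Differentiable ℝ (Function.uncurry F)
  even : ∀ c, (F c).Even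

lemma hasFDerivAt_uncurry {F : ℝ → ℝ → ℝ} {c₁ c₂ : ℝ}
    (hF : DifferentiableAt ℝ (Function.uncurry F) (c₁, c₂)) :
    HasFDerivAt (Function.uncurry F)
      (partialFst F c₁ c₂ • ContinuousLinearMap.fst ℝ ℝ ℝ +
        partialSnd F c₁ c₂ • ContinuousLinearMap.snd ℝ ℝ ℝ) (c₁, c₂) := by
  convert hF.hasFDerivAt using 1
  have h₁ := (hF.hasFDerivAt.comp_hasDerivAt c₁
    ((hasDerivAt_id c₁).prodMk (hasDerivAt_const c₁ c₂))).deriv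
  have h₂ := (hF.hasFDerivAt.comp_hasDerivAt c₂
    ((hasDerivAt_const c₂ c₁).prodMk (hasDerivAt_id c₂))).deriv
  ext
  · simpa [partialFst, Function.comp_def] using h₁
  · simpa [partialSnd, Function.comp_def] using h₂

lemma hasFDerivAt_norm {E : Type*} [NormedAddCommGroup E] [InnerProductSpace ℝ E] {v : E}
    (hv : v ≠ 0) : HasFDerivAt (‖·‖) (‖v‖⁻¹ • innerSL ℝ v) v := by
  have hsqrt := (hasStrictFDerivAt_norm_sq v).hasFDerivAt.sqrt (by simpa using hv)
  simp only [sqrt_sq (norm_nonneg _)] at hsqrt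
  refine hsqrt.congr_fderiv ?_
  ext y
  simp [field]

namespace IsConvexProfile

variable {F : ℝ → ℝ → ℝ} {E : Type*} [NormedAddCommGroup E]

lemma convexOn_snd (hF : IsConvexProfile F) (c : ℝ) : ConvexOn ℝ univ (F c) := by
  have h := hF.convexOn.comp_affineMap
    ((AffineMap.const ℝ ℝ c).prod (AffineMap.id ℝ ℝ))
  exact h

lemma differentiable_snd (hF : IsConvexProfile F) (c : ℝ) : Differentiable ℝ (F c) :=
  hF.differentiable.comp ((differentiable_const c).prodMk differentiable_id)

lemma partialSnd_zero (hF : IsConvexProfile F) (c : ℝ) : partialSnd F c 0 = 0 :=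
  deriv_zero_of_even (hF.even c)

lemma partialSnd_nonneg (hF : IsConvexProfile F) (c₁ : ℝ) {c₂ : ℝ} (hc₂ : 0 ≤ c₂) :
    0 ≤ partialSnd F c₁ c₂ :=
  deriv_nonneg_of_convexOn_of_even (hF.convexOn_snd c₁) (hF.differentiable_snd c₁) (hF.even c₁) hc₂

lemma convexOn_comp_norm [NormedSpace ℝ E] (hF : IsConvexProfile F) :
    ConvexOn ℝ univ fun p : ℝ × E => F p.1 ‖p.2‖ := by
  refine ⟨convex_univ, fun p _ q _ a b ha hb hab => ?_⟩
  have hnorm : ‖a • p.2 + b • q.2‖ ≤ a * ‖p.2‖ + b * ‖q.2‖ := by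
    simpa [norm_smul, abs_of_nonneg, ha, hb] using norm_add_le (a • p.2) (b • q.2)
  calc F (a • p.1 + b • q.1) ‖a • p.2 + b • q.2‖
      ≤ F (a • p.1 + b • q.1) (a * ‖p.2‖ + b * ‖q.2‖) :=
        monotoneOn_Ici_of_convexOn_of_even (hF.convexOn_snd _) (hF.even _) (norm_nonneg _)
          ((norm_nonneg _).trans hnorm) hnorm
    _ ≤ a • F p.1 ‖p.2‖ + b • F q.1 ‖q.2‖ :=
        hF.convexOn.2 (mem_univ (p.1, ‖p.2‖)) (mem_univ (q.1, ‖q.2‖)) ha hb hab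

lemma hasFDerivAt_comp_norm [InnerProductSpace ℝ E] (hF : IsConvexProfile F) (t : ℝ) (v : E) :
    HasFDerivAt (fun p : ℝ × E => F p.1 ‖p.2‖)
      (partialFst F t ‖v‖ • ContinuousLinearMap.fst ℝ ℝ E +
        (partialSnd F t ‖v‖ * ‖v‖⁻¹) • (innerSL ℝ v).comp (ContinuousLinearMap.snd ℝ ℝ E))
      (t, v) := by
  have hd := hasFDerivAt_uncurry (hF.differentiable (t, ‖v‖))
  rcases eq_or_ne v 0 with rfl | hv
  · rw [norm_zero, hF.partialSnd_zero, zero_smul, add_zero] at hd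
    rw [norm_zero, hF.partialSnd_zero, zero_mul, zero_smul, add_zero, hasFDerivAt_iff_isLittleO]
    have hcont : Tendsto (fun p : ℝ × E => (p.1, ‖p.2‖)) (𝓝 (t, 0)) (𝓝 (t, 0)) :=
      (continuous_fst.prodMk continuous_snd.norm).tendsto' _ _ (by simp)
    refine Asymptotics.isLittleO_norm_right.1 <|
      (hd.isLittleO.comp_tendsto hcont).norm_right.congr (fun p => ?_) fun p => ?_
    · simp [Function.uncurry]
    · simp [Prod.norm_def]
  · have hnorm : HasFDerivAt (fun p : ℝ × E => (p.1, ‖p.2‖)) _ (t, v) :=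
      hasFDerivAt_fst.prodMk ((hasFDerivAt_norm hv).comp (t, v) hasFDerivAt_snd)
    refine (HasFDerivAt.comp (t, v) hd hnorm).congr_fderiv ?_
    ext <;> simp [mul_assoc]

end IsConvexProfile

end Profile

section Axial

variable {H : Type*} [NormedAddCommGroup H] [InnerProductSpace ℝ H]

/-- The orthogonal projection `Π_{w⊥}` onto the hyperplane orthogonal to `w`. -/
def perpProj (w : H) : H →L[ℝ] H := (ℝ ∙ w)ᗮ.starProjection

/-- The functional `x ↦ F (⟪w, x⟫, ‖Π_{w⊥} x‖)` with axis `w`. -/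
def axialFun (F : ℝ → ℝ → ℝ) (w x : H) : ℝ := F ⟪w, x⟫ ‖perpProj w x‖

/-- The gradient of `axialFun F w` at `x`. Where `Π_{w⊥} x = 0`, the second term vanishes. -/
def axialGrad (F : ℝ → ℝ → ℝ) (w x : H) : H :=
  partialFst F ⟪w, x⟫ ‖perpProj w x‖ • w +
    (partialSnd F ⟪w, x⟫ ‖perpProj w x‖ * ‖perpProj w x‖⁻¹) • perpProj w x

lemma inner_perpProj_perpProj (w x y : H) : ⟪perpProj w x, perpProj w y⟫ = ⟪perpProj w x, y⟫ := by
  rw [perpProj, ← Submodule.inner_starProjection_left_eq_right,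
    Submodule.starProjection_eq_self_iff.2 (Submodule.starProjection_apply_mem _ x)]

lemma perpProj_apply {w : H} (hw : ‖w‖ = 1) (x : H) : perpProj w x = x - ⟪w, x⟫ • w := by
  rw [perpProj, Submodule.starProjection_orthogonal_val,
    Submodule.starProjection_unit_singleton ℝ hw]

lemma norm_sq_eq_inner_sq_add_norm_perpProj_sq {w : H} (hw : ‖w‖ = 1) (x : H) :
    ‖x‖ ^ 2 = ⟪w, x⟫ ^ 2 + ‖perpProj w x‖ ^ 2 := by
  rw [Submodule.norm_sq_eq_add_norm_sq_starProjection x (ℝ ∙ w),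
    Submodule.starProjection_unit_singleton ℝ hw, norm_smul, hw, mul_one, norm_eq_abs, sq_abs,
    perpProj]

variable {F : ℝ → ℝ → ℝ}

lemma convexOn_axialFun (hF : IsConvexProfile F) (w : H) : ConvexOn ℝ univ (axialFun F w) :=
  (hF.convexOn_comp_norm (E := H)).comp_linearMap ((innerSL ℝ w).prod (perpProj w)).toLinearMap

lemma hasGradientAt_axialFun [CompleteSpace H] (hF : IsConvexProfile F) (w x : H) :
    HasGradientAt (axialFun F w) (axialGrad F w x) x := by
  rw [hasGradientAt_iff_hasFDerivAt]
  refine ((hF.hasFDerivAt_comp_norm ⟪w, x⟫ (perpProj w x)).comp x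
    ((innerSL ℝ w).prod (perpProj w)).hasFDerivAt).congr_fderiv ?_
  ext y
  simp [axialGrad, inner_perpProj_perpProj]

end Axial

section MarginProblem

variable {H : Type*} [NormedAddCommGroup H] [InnerProductSpace ℝ H]

/-- The functional `h ↦ F (⟪w, S h⟫, ‖Π_{w⊥} (S h)‖) + ⟪Γ, S h⟫`. With `F = F_κ`, `w = W`,
`Γ = ψ^{1/2} Π_{W⊥}(G)` and `S` the multiplication by `X^{1/2}` in `L²(P)`, it is `ψ^{1/2}` times
the functional `𝓡_{ψ,κ,P}`. -/
def marginFun (F : ℝ → ℝ → ℝ) (S : H ≃L[ℝ] H) (w Γ h : H) : ℝ := axialFun F w (S h) + ⟪Γ, S h⟫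

/-- The gradient of `marginFun F S w Γ` for a self-adjoint operator `S`. -/
def marginGrad (F : ℝ → ℝ → ℝ) (S : H ≃L[ℝ] H) (w Γ h : H) : H := S (axialGrad F w (S h) + Γ)

variable {F : ℝ → ℝ → ℝ} {S : H ≃L[ℝ] H} {w Γ : H}

lemma convexOn_marginFun (hF : IsConvexProfile F) (S : H ≃L[ℝ] H) (w Γ : H) :
    ConvexOn ℝ univ (marginFun F S w Γ) :=
  ((convexOn_axialFun hF w).add ((innerSL ℝ Γ).toLinearMap.convexOn convex_univ)).comp_linearMap
    S.toLinearEquiv.toLinearMap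

lemma hasGradientAt_marginFun [CompleteSpace H] (hF : IsConvexProfile F)
    (hS : ∀ x y, ⟪S x, y⟫ = ⟪x, S y⟫) (w Γ h : H) :
    HasGradientAt (marginFun F S w Γ) (marginGrad F S w Γ h) h := by
  rw [hasGradientAt_iff_hasFDerivAt]
  refine (((hasGradientAt_axialFun hF w (S h)).hasFDerivAt.comp h S.hasFDerivAt).add
    ((innerSL ℝ Γ).hasFDerivAt.comp h S.hasFDerivAt)).congr_fderiv ?_
  ext y
  simp [marginGrad, hS]

lemma not_bddBelow_range_marginFun (S : H ≃L[ℝ] H) (hw : ‖w‖ = 1) (hwΓ : ⟪w, Γ⟫ = 0) {c K r : ℝ}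
    (hr₀ : 0 ≤ r) (hr : r < ‖Γ‖) (hgrowth : ∀ t, 0 ≤ t → F (t * c) t ≤ K + t * r) :
    ¬BddBelow (range (marginFun F S w Γ)) := by
  rintro ⟨b, hb⟩
  have hΓ : ‖Γ‖ ≠ 0 := (hr₀.trans_lt hr).ne'
  have hray : ∀ t, 0 ≤ t → b ≤ K + t * (r - ‖Γ‖) := fun t ht => by
    let x := (t * c) • w - (t * ‖Γ‖⁻¹) • Γ
    have hwx : ⟪w, x⟫ = t * c := by
      simp [x, inner_sub_right, real_inner_smul_right, hw, hwΓ]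
    have hproj : ‖perpProj w x‖ = t := by
      rw [perpProj_apply hw, hwx]
      simp [x, norm_smul, abs_of_nonneg ht, hΓ]
    have hΓx : ⟪Γ, x⟫ = -(t * ‖Γ‖) := by
      simp [x, inner_sub_right, real_inner_smul_right, real_inner_comm w Γ, hwΓ]
      field
    calc b ≤ marginFun F S w Γ (S.symm x) := hb ⟨_, rfl⟩
      _ = F (t * c) t - t * ‖Γ‖ := by
        rw [marginFun, axialFun, S.apply_symm_apply, hwx, hproj, hΓx, sub_eq_add_neg]
      _ ≤ K + t * (r - ‖Γ‖) := by linarith [hgrowth t ht]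
  have hlim : Tendsto (fun t => K + t * (r - ‖Γ‖)) atTop atBot :=
    tendsto_atBot_add_const_left _ _ (tendsto_id.atTop_mul_const_of_neg (sub_neg.2 hr))
  obtain ⟨t, ht, htb⟩ := ((eventually_ge_atTop 0).and (hlim.eventually_lt_atBot b)).exists
  exact (hray t ht).not_gt htb

lemma perpProj_ne_zero_of_isSphereCritical (hS : ∀ x y, ⟪S x, y⟫ = ⟪x, S y⟫) (hw : ‖w‖ = 1)
    (hwΓ : ⟪w, Γ⟫ = 0)
    (hoff : ∀ c, |c| = ‖S.symm w‖⁻¹ → 0 ≤ partialFst F c 0 * c ∨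
      partialFst F c 0 • (w - c ^ 2 • S.symm (S.symm w)) + Γ ≠ 0)
    {h : H} {σ : ℝ} (hcritical : IsSphereCritical (marginGrad F S w Γ) h σ) :
    perpProj w (S h) ≠ 0 := by
  intro hperp
  obtain ⟨hnorm, hσ, hcrit⟩ := hcritical
  set c := ⟪w, S h⟫ with hc
  set a := partialFst F c 0 with ha
  have hSh : S h = c • w := sub_eq_zero.1 ((perpProj_apply hw (S h)).symm.trans hperp)
  have hh : h = c • S.symm w := by rw [← map_smul, ← hSh, S.symm_apply_apply]
  have hcnorm : |c| * ‖S.symm w‖ = 1 := by rw [← norm_eq_abs, ← norm_smul, ← hh, hnorm]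
  have hstat : a • w + Γ + (σ * c) • S.symm (S.symm w) = 0 := by
    have hgrad : axialGrad F w (S h) = a • w := by simp [axialGrad, hperp, ← hc, ha]
    have hSh' : S.symm h = c • S.symm (S.symm w) := by rw [hh, map_smul]
    simpa only [marginGrad, hgrad, map_add, S.symm_apply_apply, map_smul, hSh', smul_smul,
      map_zero] using congr(S.symm $hcrit)
  have hac : a * c = -σ := by
    have hinner : ⟪w, S.symm (S.symm w)⟫ = ‖S.symm w‖ ^ 2 := by
      rw [← real_inner_self_eq_norm_sq, ← S.apply_symm_apply w, hS]
      simp only [S.apply_symm_apply]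
    have hw₀ := congr(⟪w, $hstat⟫)
    simp only [inner_add_right, real_inner_smul_right, real_inner_self_eq_norm_sq, hw, hwΓ,
      hinner, inner_zero_right] at hw₀
    have hc₁ : c ^ 2 * ‖S.symm w‖ ^ 2 = 1 := by rw [← sq_abs, ← mul_pow, hcnorm, one_pow]
    linear_combination c * hw₀ - σ * hc₁
  rcases hoff c (eq_inv_of_mul_eq_one_left hcnorm) with hpos | hne
  · linarith
  · refine hne (Eq.trans ?_ hstat)
    rw [show σ * c = -(a * c ^ 2) by linear_combination c * hac]
    module

end MarginProblem

/-! ### The norm of the positive part in a Hilbert lattice -/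

section NormPosPart

variable {V : Type*} [NormedAddCommGroup V] [Lattice V] [HasSolidNorm V] [IsOrderedAddMonoid V]

lemma norm_posPart_le_norm_posPart_add_sub (u v : V) : ‖u⁺‖ ≤ ‖v⁺ + (u - v)‖ :=
  norm_le_norm_of_abs_le_abs <| by
    rw [abs_of_nonneg (posPart_nonneg u)]
    refine sup_le ?_ (abs_nonneg _)
    calc u = v + (u - v) := (add_sub_cancel v u).symm
      _ ≤ v⁺ + (u - v) := by gcongr; exact le_posPart v
      _ ≤ |v⁺ + (u - v)| := le_abs_self _

lemma norm_posPart_smul_add_smul_le [NormedSpace ℝ V] [IsOrderedModule ℝ V] (u v : V) {a b : ℝ}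
    (ha : 0 ≤ a) (hb : 0 ≤ b) : ‖(a • u + b • v)⁺‖ ≤ a * ‖u⁺‖ + b * ‖v⁺‖ := by
  have hnonneg : 0 ≤ a • u⁺ + b • v⁺ :=
    add_nonneg (smul_nonneg ha (posPart_nonneg u)) (smul_nonneg hb (posPart_nonneg v))
  have hle : (a • u + b • v)⁺ ≤ a • u⁺ + b • v⁺ :=
    sup_le (add_le_add (smul_le_smul_of_nonneg_left (le_posPart u) ha)
      (smul_le_smul_of_nonneg_left (le_posPart v) hb)) hnonneg
  calc ‖(a • u + b • v)⁺‖ ≤ ‖a • u⁺ + b • v⁺‖ := norm_le_norm_of_abs_le_abs <| by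
        rwa [abs_of_nonneg (posPart_nonneg _), abs_of_nonneg hnonneg]
    _ ≤ a * ‖u⁺‖ + b * ‖v⁺‖ := (norm_add_le _ _).trans_eq <| by
        rw [norm_smul_of_nonneg ha, norm_smul_of_nonneg hb]

lemma convexOn_norm_posPart [NormedSpace ℝ V] [IsOrderedModule ℝ V] :
    ConvexOn ℝ univ fun v : V => ‖v⁺‖ :=
  ⟨convex_univ, fun u _ v _ _ _ ha hb _ => norm_posPart_smul_add_smul_le u v ha hb⟩

lemma differentiableAt_norm_posPart [InnerProductSpace ℝ V] [IsOrderedModule ℝ V] {v : V}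
    (hv : v⁺ ≠ 0) : DifferentiableAt ℝ (fun u : V => ‖u⁺‖) v := by
  have hupper : DifferentiableAt ℝ (fun u : V => ‖v⁺ + (u - v)‖) v :=
    DifferentiableAt.norm ℝ (by fun_prop) (by simpa using hv)
  have hfderiv := hasFDerivAt_of_convexOn_of_le convexOn_norm_posPart
    (fun u => norm_posPart_le_norm_posPart_add_sub u v) (by simp) hupper.hasFDerivAt
  exact hfderiv.differentiableAt

end NormPosPart

section HingeNorm

variable {V : Type*} [NormedAddCommGroup V] [Lattice V] [HasSolidNorm V] [IsOrderedAddMonoid V]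
  [InnerProductSpace ℝ V] [IsOrderedModule ℝ V]

/-- The function `(c₁, c₂) ↦ ‖(κ e - c₁ T - c₂ Z)⁺‖`. -/
def hingeNorm (e T Z : V) (κ c₁ c₂ : ℝ) : ℝ := ‖(κ • e - c₁ • T - c₂ • Z)⁺‖

lemma hingeNorm_mul_le (e T Z : V) {κ t : ℝ} (hκ : 0 ≤ κ) (ht : 0 ≤ t) (c : ℝ) :
    hingeNorm e T Z κ (t * c) t ≤ κ * ‖e⁺‖ + t * hingeNorm e T Z 0 c 1 := by
  have hsplit : κ • e - (t * c) • T - t • Z = κ • e + t • ((0 : ℝ) • e - c • T - (1 : ℝ) • Z) := by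
    module
  rw [hingeNorm, hsplit]
  exact norm_posPart_smul_add_smul_le _ _ hκ ht

lemma convexOn_hingeNorm (e T Z : V) (κ : ℝ) :
    ConvexOn ℝ univ (Function.uncurry (hingeNorm e T Z κ)) :=
  convexOn_norm_posPart.comp_affineMap (AffineMap.const ℝ (ℝ × ℝ) (κ • e)
    - ((LinearMap.fst ℝ ℝ ℝ).smulRight T).toAffineMap
    - ((LinearMap.snd ℝ ℝ ℝ).smulRight Z).toAffineMap)

lemma differentiable_hingeNorm {e T Z : V} {κ : ℝ}
    (hpos : ∀ c₁ c₂, hingeNorm e T Z κ c₁ c₂ ≠ 0) :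
    Differentiable ℝ (Function.uncurry (hingeNorm e T Z κ)) := fun p =>
  (differentiableAt_norm_posPart (norm_ne_zero_iff.1 (hpos p.1 p.2))).comp p
    (f := fun p : ℝ × ℝ => κ • e - p.1 • T - p.2 • Z) (by fun_prop)

end HingeNorm

instance instIsOrderedModuleLp {α : Type*} {m : MeasurableSpace α} (μ : Measure α) (p : ENNReal) :
    IsOrderedModule ℝ (Lp ℝ p μ) :=
  IsOrderedModule.of_smul_nonneg fun a ha v hv => by
    rw [← Lp.coeFn_nonneg] at hv ⊢
    filter_upwards [hv, Lp.coeFn_smul a v] with x hx hax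
    simpa [hax] using mul_nonneg ha hx

/-! ### The function `F_κ` as a norm in `L²` -/

section L2

variable {α : Type*} {m : MeasurableSpace α} {μ : Measure α} {x y : Lp ℝ 2 μ} {φ χ : α → ℝ}

lemma inner_eq_integral_mul_of_ae_eq (hx : x =ᵐ[μ] φ) (hy : y =ᵐ[μ] χ) :
    ⟪x, y⟫ = ∫ a, φ a * χ a ∂μ := by
  rw [L2.inner_def]
  refine integral_congr_ae ?_
  filter_upwards [hx, hy] with a hxa hya
  simp [hxa, hya, mul_comm]

lemma norm_eq_sqrt_integral_mul_self_of_ae_eq (hx : x =ᵐ[μ] φ) : ‖x‖ = √(∫ a, φ a * φ a ∂μ) := by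
  rw [← inner_eq_integral_mul_of_ae_eq hx hx, norm_eq_sqrt_real_inner]

end L2

section LabelLaw

variable {f : ℝ → ℝ}

instance instIsProbabilityMeasureStdG : IsProbabilityMeasure stdG := by
  unfold stdG; infer_instance

lemma integral_map_neg (μ : Measure ℝ) (φ : ℝ → ℝ) :
    ∫ x, φ x ∂μ.map Neg.neg = ∫ x, φ (-x) ∂μ :=
  integral_map_equiv (MeasurableEquiv.neg ℝ) φ

lemma map_neg_stdG : stdG.map Neg.neg = stdG := by
  simpa [stdG] using gaussianReal_map_neg (μ := 0) (v := 1)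

lemma stdG_ball_pos {δ : ℝ} (hδ : 0 < δ) : 0 < stdG (Metric.ball 0 δ) :=
  pos_iff_ne_zero.2 fun h => (Metric.measure_ball_pos volume 0 hδ).ne'
    (gaussianReal_absolutelyContinuous' 0 one_ne_zero h)

/-- The law of `T = Y·G`, where `G` is standard Gaussian and `Y = ±1` with
`P(Y = 1 | G) = f(G)`. -/
def labelLaw (f : ℝ → ℝ) : Measure ℝ :=
  stdG.withDensity (fun g => ENNReal.ofReal (f g)) +
    (stdG.withDensity fun g => ENNReal.ofReal (1 - f g)).map Neg.neg

lemma labelLaw_le (hf01 : ∀ x, f x ∈ Icc (0 : ℝ) 1) : labelLaw f ≤ (2 : ENNReal) • stdG := by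
  have hdens : ∀ p : ℝ → ℝ, (∀ x, p x ≤ 1) →
      stdG.withDensity (fun g => ENNReal.ofReal (p g)) ≤ stdG := fun p hp =>
    (withDensity_mono (Eventually.of_forall fun g => ENNReal.ofReal_le_one.2 (hp g))).trans_eq
      withDensity_one
  calc labelLaw f ≤ stdG + stdG.map Neg.neg :=
        add_le_add (hdens _ fun x => (hf01 x).2) <|
          Measure.map_mono (hdens _ fun x => by linarith [(hf01 x).1]) measurable_neg
    _ = (2 : ENNReal) • stdG := by rw [map_neg_stdG, two_smul]

lemma isFiniteMeasure_labelLaw (hf01 : ∀ x, f x ∈ Icc (0 : ℝ) 1) : IsFiniteMeasure (labelLaw f) :=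
  have : IsFiniteMeasure ((2 : ENNReal) • stdG) := Measure.smul_finite _ (by simp)
  isFiniteMeasure_of_le _ (labelLaw_le hf01)

lemma memLp_id_labelLaw (hf01 : ∀ x, f x ∈ Icc (0 : ℝ) 1) : MemLp id 2 (labelLaw f) :=
  (memLp_id_gaussianReal 2).of_measure_le_smul (by simp) (labelLaw_le hf01)

lemma labelLaw_apply_of_neg_eq (hf : Measurable f) (hf01 : ∀ x, f x ∈ Icc (0 : ℝ) 1) {s : Set ℝ}
    (hs : MeasurableSet s) (hsymm : -s = s) : labelLaw f s = stdG s := by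
  rw [labelLaw, Measure.add_apply, Measure.map_apply measurable_neg hs, Set.neg_preimage, hsymm,
    withDensity_apply _ hs, withDensity_apply _ hs, ← lintegral_add_left (by fun_prop)]
  have hone : ∀ g, ENNReal.ofReal (f g) + ENNReal.ofReal (1 - f g) = 1 := fun g => by
    rw [← ENNReal.ofReal_add (hf01 g).1 (sub_nonneg.2 (hf01 g).2), add_sub_cancel,
      ENNReal.ofReal_one]
  simp [hone]

lemma integral_labelLaw (hf : Measurable f) (hf01 : ∀ x, f x ∈ Icc (0 : ℝ) 1) {φ : ℝ → ℝ}
    (hφ : Integrable φ (labelLaw f)) :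
    ∫ t, φ t ∂labelLaw f = ∫ g, (f g * φ g + (1 - f g) * φ (-g)) ∂stdG := by
  obtain ⟨hpos, hneg⟩ := integrable_add_measure.1 hφ
  have hneg' : Integrable (fun g => φ (-g)) (stdG.withDensity fun g => ENNReal.ofReal (1 - f g)) :=
    (integrable_map_equiv (MeasurableEquiv.neg ℝ) φ).1 hneg
  have hmeas : Measurable fun g => ENNReal.ofReal (f g) := by fun_prop
  have hmeas' : Measurable fun g => ENNReal.ofReal (1 - f g) := by fun_prop
  have htop : ∀ p : ℝ → ℝ, ∀ᵐ g ∂stdG, ENNReal.ofReal (p g) < ⊤ := fun p =>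
    Eventually.of_forall fun g => ENNReal.ofReal_lt_top
  rw [integrable_withDensity_iff_integrable_smul' hmeas (htop f)] at hpos
  rw [integrable_withDensity_iff_integrable_smul' hmeas' (htop _)] at hneg'
  rw [labelLaw, integral_add_measure (integrable_add_measure.1 hφ).1 hneg,
    integral_withDensity_eq_integral_toReal_smul hmeas (htop f),
    integral_map_neg,
    integral_withDensity_eq_integral_toReal_smul hmeas' (htop _), ← integral_add hpos hneg']
  simp [ENNReal.toReal_ofReal, (hf01 _).1, (hf01 _).2]

end LabelLaw

section Fk

variable {f : ℝ → ℝ}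

/-- The joint law of `T = Y·G` and an independent standard Gaussian `Z`. -/
def jointLaw (f : ℝ → ℝ) : Measure (ℝ × ℝ) := (labelLaw f).prod stdG

lemma Fk_neg (f : ℝ → ℝ) (κ c₁ : ℝ) : (Fk f κ c₁).Even := fun c₂ => by
  unfold Fk
  congr 2 with g
  conv_rhs => rw [← map_neg_stdG, integral_map_neg]
  simp only [mul_neg, neg_mul]

lemma memLp_fst_jointLaw (hf01 : ∀ x, f x ∈ Icc (0 : ℝ) 1) :
    MemLp (fun p : ℝ × ℝ => p.1) 2 (jointLaw f) :=
  have := isFiniteMeasure_labelLaw hf01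
  (memLp_id_labelLaw hf01).comp_fst stdG

lemma memLp_snd_jointLaw (hf01 : ∀ x, f x ∈ Icc (0 : ℝ) 1) :
    MemLp (fun p : ℝ × ℝ => p.2) 2 (jointLaw f) :=
  have := isFiniteMeasure_labelLaw hf01
  (memLp_id_gaussianReal 2).comp_snd (labelLaw f)

lemma memLp_hinge_jointLaw (hf01 : ∀ x, f x ∈ Icc (0 : ℝ) 1) (κ c₁ c₂ : ℝ) :
    MemLp (fun p : ℝ × ℝ => max (κ - c₁ * p.1 - c₂ * p.2) 0) 2 (jointLaw f) :=
  have := isFiniteMeasure_labelLaw hf01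
  have : IsFiniteMeasure (jointLaw f) := by unfold jointLaw; infer_instance
  (((memLp_const κ).sub ((memLp_fst_jointLaw hf01).const_mul c₁)).sub
    ((memLp_snd_jointLaw hf01).const_mul c₂)).pos_part

lemma Fk_eq_sqrt_integral (hf : Measurable f) (hf01 : ∀ x, f x ∈ Icc (0 : ℝ) 1) (κ c₁ c₂ : ℝ) :
    Fk f κ c₁ c₂ = √(∫ p, max (κ - c₁ * p.1 - c₂ * p.2) 0 ^ 2 ∂jointLaw f) := by
  have := isFiniteMeasure_labelLaw hf01
  have hint := (memLp_hinge_jointLaw hf01 κ c₁ c₂).integrable_sq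
  rw [jointLaw, integral_prod _ hint, integral_labelLaw hf hf01 hint.integral_prod_left, Fk]
  have hz : ∀ t, Integrable (fun z => max (κ - c₁ * t - c₂ * z) 0 ^ 2) stdG := fun t =>
    (((memLp_const _).sub ((memLp_id_gaussianReal 2).const_mul c₂)).pos_part).integrable_sq
  congr 2 with g
  have hneg := hz (-g)
  simp only [mul_neg, sub_neg_eq_add] at hneg ⊢
  rw [integral_add ((hz g).const_mul _) (hneg.const_mul _), integral_const_mul, integral_const_mul]

theorem exists_Fk_eq_hingeNorm (hf : Measurable f) (hf01 : ∀ x, f x ∈ Icc (0 : ℝ) 1) :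
    ∃ e T Z : Lp ℝ 2 (jointLaw f), ∀ κ c₁ c₂, Fk f κ c₁ c₂ = hingeNorm e T Z κ c₁ c₂ := by
  have := isFiniteMeasure_labelLaw hf01
  have : IsFiniteMeasure (jointLaw f) := by unfold jointLaw; infer_instance
  have hT := memLp_fst_jointLaw hf01
  have hZ := memLp_snd_jointLaw hf01
  have he : MemLp (fun _ : ℝ × ℝ => (1 : ℝ)) 2 (jointLaw f) := memLp_const 1
  refine ⟨he.toLp, hT.toLp, hZ.toLp, fun κ c₁ c₂ => ?_⟩
  have hv : ((κ • he.toLp - c₁ • hT.toLp - c₂ • hZ.toLp)⁺ : Lp ℝ 2 (jointLaw f)) =ᵐ[jointLaw f]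
      fun p => max (κ - c₁ * p.1 - c₂ * p.2) 0 := by
    rw [← MemLp.toLp_const_smul, ← MemLp.toLp_const_smul, ← MemLp.toLp_const_smul,
      ← MemLp.toLp_sub, ← MemLp.toLp_sub]
    filter_upwards [Lp.coeFn_sup _ (0 : Lp ℝ 2 (jointLaw f)), Lp.coeFn_zero ℝ 2 (jointLaw f),
      MemLp.coeFn_toLp (((he.const_smul κ).sub (hT.const_smul c₁)).sub (hZ.const_smul c₂))]
      with p hsup hzero hp
    rw [posPart_def, hsup, Pi.sup_apply, hzero, hp]
    simp
  simp only [Fk_eq_sqrt_integral hf hf01, hingeNorm, norm_eq_sqrt_integral_mul_self_of_ae_eq hv, sq]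

lemma Fk_pos (hf : Measurable f) (hf01 : ∀ x, f x ∈ Icc (0 : ℝ) 1) {κ : ℝ} (hκ : 0 < κ)
    (c₁ c₂ : ℝ) : 0 < Fk f κ c₁ c₂ := by
  have := isFiniteMeasure_labelLaw hf01
  have hcont : Continuous fun p : ℝ × ℝ => κ - c₁ * p.1 - c₂ * p.2 := by fun_prop
  obtain ⟨δ, hδ, hball⟩ := Metric.eventually_nhds_iff_ball.1 <|
    (hcont.tendsto' (0, 0) κ (by simp)).eventually_const_lt hκ
  rw [Fk_eq_sqrt_integral hf hf01, sqrt_pos, integral_pos_iff_support_of_nonneg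
    (fun p => sq_nonneg _) (memLp_hinge_jointLaw hf01 κ c₁ c₂).integrable_sq]
  refine lt_of_lt_of_le ?_ (measure_mono (s := Metric.ball (0, 0) δ) fun p hp => ?_)
  · rw [jointLaw, ← ball_prod_same, Measure.prod_prod,
      labelLaw_apply_of_neg_eq hf hf01 Metric.isOpen_ball.measurableSet (by simp)]
    exact ENNReal.mul_pos (stdG_ball_pos hδ).ne' (stdG_ball_pos hδ).ne'
  · exact (pow_pos ((hball p hp).trans_le (le_max_left _ _)) 2).ne'

theorem isConvexProfile_Fk (hf : Measurable f) (hf01 : ∀ x, f x ∈ Icc (0 : ℝ) 1) {κ : ℝ}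
    (hκ : 0 < κ) : IsConvexProfile (Fk f κ) := by
  obtain ⟨e, T, Z, hrep⟩ := exists_Fk_eq_hingeNorm hf hf01
  have heq : Fk f κ = hingeNorm e T Z κ := funext₂ (hrep κ)
  have hpos : ∀ c₁ c₂, hingeNorm e T Z κ c₁ c₂ ≠ 0 := fun c₁ c₂ =>
    hrep κ c₁ c₂ ▸ (Fk_pos hf hf01 hκ c₁ c₂).ne'
  exact ⟨heq ▸ convexOn_hingeNorm e T Z κ, heq ▸ differentiable_hingeNorm hpos, Fk_neg f κ⟩

lemma exists_Fk_mul_le (hf : Measurable f) (hf01 : ∀ x, f x ∈ Icc (0 : ℝ) 1) {κ : ℝ}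
    (hκ : 0 ≤ κ) : ∃ K, ∀ t c, 0 ≤ t → Fk f κ (t * c) t ≤ K + t * Fk f 0 c 1 := by
  obtain ⟨e, T, Z, hrep⟩ := exists_Fk_eq_hingeNorm hf hf01
  exact ⟨κ * ‖e⁺‖, fun t c ht => by simpa only [hrep] using hingeNorm_mul_le e T Z hκ ht c⟩

lemma exists_Fk_zero_lt_of_sqrt_psiStar0_lt {m : ℝ} (hm : √(psiStar0 f) < m) :
    ∃ c, Fk f 0 c 1 < m := by
  have hm₀ : 0 < m := (sqrt_nonneg _).trans_lt hm
  obtain ⟨c, hc⟩ := exists_lt_of_ciInf_lt ((sqrt_lt' hm₀).1 hm)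
  exact ⟨c, lt_of_pow_lt_pow_left₀ 2 hm₀.le hc⟩

end Fk

/-! ### The system of equations in `L²(P)` -/

section Multiplication

variable {α : Type*} {mα : MeasurableSpace α} {μ : Measure α} {m : α → ℝ} {p : ENNReal}
  [Fact (1 ≤ p)]

lemma exists_continuousLinearMap_ae_eq_mul (hm : MemLp m ⊤ μ) :
    ∃ T : Lp ℝ p μ →L[ℝ] Lp ℝ p μ, ∀ h, T h =ᵐ[μ] fun a => m a * h a :=
  ⟨(ContinuousLinearMap.mul ℝ ℝ).holderL μ ⊤ p p hm.toLp, fun h => by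
    filter_upwards [(ContinuousLinearMap.mul ℝ ℝ).coeFn_holder (r := p) hm.toLp h,
      hm.coeFn_toLp] with a hTa hma
    rw [← hma]
    exact hTa⟩

theorem exists_continuousLinearEquiv_ae_eq_mul (hm : MemLp m ⊤ μ) (hm' : MemLp m⁻¹ ⊤ μ)
    (hne : ∀ᵐ a ∂μ, m a ≠ 0) :
    ∃ T : Lp ℝ p μ ≃L[ℝ] Lp ℝ p μ, ∀ h, T h =ᵐ[μ] fun a => m a * h a := by
  obtain ⟨T, hT⟩ := exists_continuousLinearMap_ae_eq_mul (p := p) hm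
  obtain ⟨T', hT'⟩ := exists_continuousLinearMap_ae_eq_mul (p := p) hm'
  refine ⟨.equivOfInverse T T' (fun h => Lp.ext ?_) fun h => Lp.ext ?_, hT⟩
  · filter_upwards [hT' (T h), hT h, hne] with a h₁ h₂ h₃
    rw [h₁, h₂, Pi.inv_apply, inv_mul_cancel_left₀ h₃]
  · filter_upwards [hT (T' h), hT' h, hne] with a h₁ h₂ h₃
    rw [h₁, h₂, Pi.inv_apply, mul_inv_cancel_left₀ h₃]

end Multiplication

section Realization

/-- The data of the system of equations as vectors of `L²(P)`: the direction `w` of `W`, the vector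
`Γ = ψ^{1/2}·Π_{W⊥}(G)`, and the operator `S` of multiplication by `X^{1/2}`. -/
structure L2Realization (P : Measure Pt) (ψ : ℝ) where
  w : Lp ℝ 2 P
  Γ : Lp ℝ 2 P
  S : Lp ℝ 2 P ≃L[ℝ] Lp ℝ 2 P
  w_ae_eq : w =ᵐ[P] Wc
  Γ_ae_eq : Γ =ᵐ[P] fun q => √ψ * projW P Gc q
  S_ae_eq : ∀ h, S h =ᵐ[P] fun q => √(Xc q) * h q
  norm_w : ‖w‖ = 1
  inner_w_Γ : ⟪w, Γ⟫ = 0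
  Xc_pos : ∀ᵐ q ∂P, 0 < Xc q

variable {P : Measure Pt} {ψ : ℝ}

lemma exists_sqrt_Xc_mul {xmin xmax : ℝ} (hxmin : 0 < xmin)
    (hX : ∀ᵐ q ∂P, Xc q ∈ Icc xmin xmax) :
    ∃ S : Lp ℝ 2 P ≃L[ℝ] Lp ℝ 2 P, ∀ h, S h =ᵐ[P] fun q => √(Xc q) * h q := by
  have hmeas : Measurable fun q => √(Xc q) := by unfold Xc; fun_prop
  refine exists_continuousLinearEquiv_ae_eq_mul
    (memLp_top_of_bound hmeas.aestronglyMeasurable (√xmax) ?_)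
    (memLp_top_of_bound hmeas.inv.aestronglyMeasurable (√xmin)⁻¹ ?_) ?_
  all_goals filter_upwards [hX] with q hq
  · rw [norm_of_nonneg (sqrt_nonneg _)]
    exact sqrt_le_sqrt hq.2
  · rw [Pi.inv_apply, norm_of_nonneg (by positivity)]
    exact inv_anti₀ (sqrt_pos.2 hxmin) (sqrt_le_sqrt hq.1)
  · exact (sqrt_pos.2 (hxmin.trans_le hq.1)).ne'

theorem nonempty_l2Realization {xmin xmax : ℝ} (hxmin : 0 < xmin)
    (hX : ∀ᵐ q ∂P, Xc q ∈ Icc xmin xmax) (hG2 : Integrable (fun q => Gc q ^ 2) P)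
    (hW2 : ∫ q, Wc q ^ 2 ∂P = 1) (ψ : ℝ) : Nonempty (L2Realization P ψ) := by
  have hG : MemLp Gc 2 P :=
    (memLp_two_iff_integrable_sq (by unfold Gc; fun_prop)).2 hG2
  have hW : MemLp Wc 2 P := (memLp_two_iff_integrable_sq (by unfold Wc; fun_prop)).2 <|
    of_not_not fun h => by simp [integral_undef h] at hW2
  obtain ⟨S, hS⟩ := exists_sqrt_Xc_mul hxmin hX
  have hnorm : ‖hW.toLp‖ = 1 := by
    rw [norm_eq_sqrt_integral_mul_self_of_ae_eq hW.coeFn_toLp]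
    simp only [← sq, hW2, sqrt_one]
  have hproj : perpProj hW.toLp hG.toLp = hG.toLp - ip P Gc Wc • hW.toLp := by
    rw [perpProj_apply hnorm, inner_eq_integral_mul_of_ae_eq hW.coeFn_toLp hG.coeFn_toLp]
    simp only [ip, mul_comm]
  exact ⟨{
    w := hW.toLp
    Γ := √ψ • perpProj hW.toLp hG.toLp
    S := S
    w_ae_eq := hW.coeFn_toLp
    Γ_ae_eq := by
      rw [hproj]
      filter_upwards [Lp.coeFn_smul (√ψ) (hG.toLp - ip P Gc Wc • hW.toLp),
        Lp.coeFn_sub hG.toLp (ip P Gc Wc • hW.toLp), Lp.coeFn_smul (ip P Gc Wc) hW.toLp,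
        hG.coeFn_toLp, hW.coeFn_toLp] with q h₁ h₂ h₃ h₄ h₅
      simp only [h₁, h₂, h₃, h₄, h₅, Pi.smul_apply, Pi.sub_apply, smul_eq_mul, projW]
    S_ae_eq := hS
    norm_w := hnorm
    inner_w_Γ := by
      rw [real_inner_smul_right, real_inner_comm, ← inner_perpProj_perpProj,
        perpProj_apply hnorm hW.toLp]
      simp [hnorm]
    Xc_pos := hX.mono fun q hq => hxmin.trans_le hq.1 }⟩

namespace L2Realization

variable (M : L2Realization P ψ)

lemma inner_S_left (x y : Lp ℝ 2 P) : ⟪M.S x, y⟫ = ⟪x, M.S y⟫ := by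
  rw [inner_eq_integral_mul_of_ae_eq (M.S_ae_eq x) ae_eq_rfl,
    inner_eq_integral_mul_of_ae_eq ae_eq_rfl (M.S_ae_eq y)]
  simp only [mul_assoc, mul_left_comm]

lemma S_symm_ae_eq (h : Lp ℝ 2 P) : M.S.symm h =ᵐ[P] fun q => (√(Xc q))⁻¹ * h q := by
  filter_upwards [M.S_ae_eq (M.S.symm h), M.Xc_pos] with q hq hXq
  rw [M.S.apply_symm_apply] at hq
  rw [hq, inv_mul_cancel_left₀ (sqrt_pos.2 hXq).ne']

lemma norm_Γ : ‖M.Γ‖ = √ψ * pnorm P (projW P Gc) := by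
  have hsq : ∀ q, √ψ * projW P Gc q * (√ψ * projW P Gc q) =
      √ψ * √ψ * (projW P Gc q * projW P Gc q) := fun q => mul_mul_mul_comm ..
  rw [norm_eq_sqrt_integral_mul_self_of_ae_eq M.Γ_ae_eq, pnorm, ip]
  simp only [hsq, integral_const_mul]
  rw [sqrt_mul (by positivity), sqrt_mul_self (sqrt_nonneg ψ)]

lemma zetaP_eq : zetaP P = ‖M.S.symm M.w‖⁻¹ := by
  have hSw : M.S.symm M.w =ᵐ[P] fun q => (√(Xc q))⁻¹ * Wc q := by
    filter_upwards [M.S_symm_ae_eq M.w, M.w_ae_eq] with q h₁ h₂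
    rw [h₁, h₂]
  rw [zetaP, pnorm, ip, norm_eq_sqrt_integral_mul_self_of_ae_eq hSw]

lemma pnorm_eq (a z : ℝ) :
    pnorm P (fun q => a * (1 - z ^ 2 * (Xc q)⁻¹) * Wc q + √ψ * projW P Gc q) =
      ‖a • (M.w - z ^ 2 • M.S.symm (M.S.symm M.w)) + M.Γ‖ := by
  refine (norm_eq_sqrt_integral_mul_self_of_ae_eq ?_).symm
  set v := M.S.symm (M.S.symm M.w) with hv
  have hv' : v =ᵐ[P] fun q => (Xc q)⁻¹ * Wc q := by
    filter_upwards [M.S_symm_ae_eq (M.S.symm M.w), M.S_symm_ae_eq M.w, M.w_ae_eq, M.Xc_pos]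
      with q h₁ h₂ h₃ hXq
    rw [hv, h₁, h₂, h₃, ← mul_assoc, ← mul_inv, mul_self_sqrt hXq.le]
  filter_upwards [Lp.coeFn_add (a • (M.w - z ^ 2 • v)) M.Γ, Lp.coeFn_smul a (M.w - z ^ 2 • v),
    Lp.coeFn_sub M.w (z ^ 2 • v), Lp.coeFn_smul (z ^ 2) v, hv', M.w_ae_eq, M.Γ_ae_eq]
    with q h₁ h₂ h₃ h₄ h₅ h₆ h₇
  simp only [h₁, h₂, h₃, h₄, h₅, h₆, h₇, Pi.add_apply, Pi.smul_apply, Pi.sub_apply, smul_eq_mul]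
  ring

lemma off_axis_of_condB2_of_condB3 {f : ℝ → ℝ} {κ : ℝ} (hF : IsConvexProfile (Fk f κ))
    (hB2 : CondB2 f P ψ κ) (hB3 : CondB3 f P ψ κ) (c : ℝ) (hc : |c| = ‖M.S.symm M.w‖⁻¹) :
    0 ≤ partialFst (Fk f κ) c 0 * c ∨
      partialFst (Fk f κ) c 0 • (M.w - c ^ 2 • M.S.symm (M.S.symm M.w)) + M.Γ ≠ 0 := by
  have hd2F : ∀ c, d2F f κ c 0 = 0 := hF.partialSnd_zero
  have hζ : 0 ≤ zetaP P := by rw [M.zetaP_eq]; positivity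
  rw [← M.zetaP_eq, abs_eq hζ] at hc
  rw [CondB2, M.pnorm_eq, hd2F] at hB2
  rw [CondB3, ← neg_sq, M.pnorm_eq, hd2F] at hB3
  rcases hc with rfl | rfl
  · exact hB2.imp (fun h => mul_nonneg h.le hζ) norm_pos_iff.1
  · exact hB3.imp (fun h => mul_nonneg_of_nonpos_of_nonpos h.le (neg_nonpos.2 hζ)) norm_pos_iff.1

theorem not_bddBelow_range_marginFun_of_condB1 {f : ℝ → ℝ} {κ : ℝ} (hf : Measurable f)
    (hf01 : ∀ x, f x ∈ Icc (0 : ℝ) 1) (hκ : 0 ≤ κ) (hB1 : CondB1 f P ψ) :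
    ¬BddBelow (range (marginFun (Fk f κ) M.S M.w M.Γ)) := by
  rw [CondB1, ← M.norm_Γ] at hB1
  obtain ⟨c, hc⟩ := exists_Fk_zero_lt_of_sqrt_psiStar0_lt hB1
  obtain ⟨K, hK⟩ := exists_Fk_mul_le hf hf01 hκ
  exact not_bddBelow_range_marginFun M.S M.norm_w M.inner_w_Γ (Real.sqrt_nonneg _) hc
    fun t ht => hK t c ht

section Translation

variable {β σ : ℝ}

include M in
lemma exists_ae_eq_neg_div (hβ : 0 ≤ β) (hσ : 0 < σ) (n : Lp ℝ 2 P) :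
    ∃ h : Lp ℝ 2 P, h =ᵐ[P] fun q => -(n q / (β * √(Xc q) + σ * (√(Xc q))⁻¹)) := by
  have hmeas : Measurable fun q => √(Xc q) := by unfold Xc; fun_prop
  have hdom : MemLp (fun q => -(n q / (β * √(Xc q) + σ * (√(Xc q))⁻¹))) 2 P := by
    refine (Lp.memLp (M.S n)).of_le_mul (c := σ⁻¹) ?_ ?_
    · have hden : Measurable fun q => β * √(Xc q) + σ * (√(Xc q))⁻¹ := by fun_prop
      have hn := (Lp.aestronglyMeasurable n).aemeasurable
      exact (hn.div hden.aemeasurable).neg.aestronglyMeasurable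
    · filter_upwards [M.S_ae_eq n, M.Xc_pos] with q hq hXq
      have hx := sqrt_pos.2 hXq
      have hden : σ * (√(Xc q))⁻¹ ≤ β * √(Xc q) + σ * (√(Xc q))⁻¹ :=
        le_add_of_nonneg_left (by positivity)
      have hden₀ : 0 ≤ β * √(Xc q) + σ * (√(Xc q))⁻¹ := by positivity
      rw [hq, norm_neg, norm_div, norm_mul, norm_of_nonneg hx.le, norm_of_nonneg hden₀]
      calc ‖n q‖ / (β * √(Xc q) + σ * (√(Xc q))⁻¹) ≤ ‖n q‖ / (σ * (√(Xc q))⁻¹) := by gcongr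
        _ = σ⁻¹ * (√(Xc q) * ‖n q‖) := by field_simp
  exact ⟨hdom.toLp, hdom.coeFn_toLp⟩

lemma S_smul_S_add_add_smul_eq_zero_iff (hβ : 0 ≤ β) (hσ : 0 < σ) (n h : Lp ℝ 2 P) :
    M.S (β • M.S h + n) + σ • h = 0 ↔
      h =ᵐ[P] fun q => -(n q / (β * √(Xc q) + σ * (√(Xc q))⁻¹)) := by
  rw [Lp.eq_zero_iff_ae_eq_zero]
  refine eventually_congr ?_
  filter_upwards [Lp.coeFn_add (M.S (β • M.S h + n)) (σ • h), M.S_ae_eq (β • M.S h + n),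
    Lp.coeFn_add (β • M.S h) n, Lp.coeFn_smul β (M.S h), M.S_ae_eq h, Lp.coeFn_smul σ h, M.Xc_pos]
    with q h₁ h₂ h₃ h₄ h₅ h₆ hXq
  have hx := sqrt_pos.2 hXq
  have hden : 0 < β * √(Xc q) + σ * (√(Xc q))⁻¹ := by positivity
  have hfactor : √(Xc q) * (β * (√(Xc q) * h q) + n q) + σ * h q =
      √(Xc q) * (h q * (β * √(Xc q) + σ * (√(Xc q))⁻¹) + n q) := by
    field_simp
    ring
  simp only [h₁, h₂, h₃, h₄, h₅, h₆, Pi.add_apply, Pi.smul_apply, Pi.zero_apply, smul_eq_mul]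
  rw [hfactor, mul_eq_zero_iff_left hx.ne', ← neg_div, eq_div_iff hden.ne', eq_neg_iff_add_eq_zero]

variable {f : ℝ → ℝ} {κ c₁ c₂ s : ℝ}

lemma marginGrad_add_smul_eq_zero_iff {F : ℝ → ℝ → ℝ} {h : Lp ℝ 2 P}
    (hc₁ : ⟪M.w, M.S h⟫ = c₁) (hc₂ : ‖perpProj M.w (M.S h)‖ = c₂)
    (hβ : 0 ≤ c₂⁻¹ * partialSnd F c₁ c₂) (hσ : 0 < σ) :
    marginGrad F M.S M.w M.Γ h + σ • h = 0 ↔ h =ᵐ[P] fun q =>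
      -((M.Γ + (partialFst F c₁ c₂ - c₁ * c₂⁻¹ * partialSnd F c₁ c₂) • M.w : Lp ℝ 2 P) q /
        (c₂⁻¹ * partialSnd F c₁ c₂ * √(Xc q) + σ * (√(Xc q))⁻¹)) := by
  rw [← M.S_smul_S_add_add_smul_eq_zero_iff hβ hσ, marginGrad, axialGrad, hc₁, hc₂,
    perpProj_apply M.norm_w, hc₁]
  congr! 3
  module

lemma solSys_iff_of_ae_eq {h : Lp ℝ 2 P} (hh : h =ᵐ[P] fun q =>
      -((M.Γ + (d1F f κ c₁ c₂ - c₁ * c₂⁻¹ * d2F f κ c₁ c₂) • M.w : Lp ℝ 2 P) q /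
        (c₂⁻¹ * d2F f κ c₁ c₂ * √(Xc q) + √ψ * s * (√(Xc q))⁻¹))) :
    SolSys f P ψ κ c₁ c₂ s ↔
      ⟪M.w, M.S h⟫ = c₁ ∧ ‖M.S h‖ ^ 2 = c₁ ^ 2 + c₂ ^ 2 ∧ ‖h‖ ^ 2 = 1 := by
  set A := d1F f κ c₁ c₂ - c₁ * c₂⁻¹ * d2F f κ c₁ c₂
  set D : Pt → ℝ := fun q => c₂⁻¹ * d2F f κ c₁ c₂ * √(Xc q) + √ψ * s * (√(Xc q))⁻¹
  have hh' : h =ᵐ[P] fun q => -((√ψ * projW P Gc q + A * Wc q) / D q) := by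
    filter_upwards [hh, Lp.coeFn_add M.Γ (A • M.w), Lp.coeFn_smul A M.w, M.w_ae_eq, M.Γ_ae_eq]
      with q h₁ h₂ h₃ h₄ h₅
    rw [h₁, h₂, Pi.add_apply, h₃, Pi.smul_apply, h₄, h₅, smul_eq_mul]
  have hinner : -⟪M.w, M.S h⟫ =
      ∫ q, (√ψ * projW P Gc q + A * Wc q) * Wc q * √(Xc q) / D q ∂P := by
    rw [inner_eq_integral_mul_of_ae_eq M.w_ae_eq (M.S_ae_eq h), ← integral_neg]
    refine integral_congr_ae ?_
    filter_upwards [hh'] with q hq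
    rw [hq]
    ring
  have hnormS : ‖M.S h‖ ^ 2 =
      ∫ q, (√ψ * projW P Gc q + A * Wc q) ^ 2 * Xc q / D q ^ 2 ∂P := by
    rw [← real_inner_self_eq_norm_sq, inner_eq_integral_mul_of_ae_eq (M.S_ae_eq h) (M.S_ae_eq h)]
    refine integral_congr_ae ?_
    filter_upwards [hh', M.Xc_pos] with q hq hXq
    rw [hq, mul_mul_mul_comm, mul_self_sqrt hXq.le, neg_mul_neg, ← sq, div_pow, mul_div_assoc',
      mul_comm]
  have hnorm : ‖h‖ ^ 2 = ∫ q, (√ψ * projW P Gc q + A * Wc q) ^ 2 / D q ^ 2 ∂P := by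
    rw [← real_inner_self_eq_norm_sq, inner_eq_integral_mul_of_ae_eq hh' hh']
    simp only [← sq, neg_sq, div_pow]
  rw [SolSys, ← hinner, ← hnormS, ← hnorm, neg_inj, eq_comm, @eq_comm ℝ (c₁ ^ 2 + _), @eq_comm ℝ 1]

theorem solSys_iff_exists_isSphereCritical (hF : IsConvexProfile (Fk f κ)) (hψ : 0 < ψ)
    (hc₂ : 0 < c₂) (hs : 0 < s) :
    SolSys f P ψ κ c₁ c₂ s ↔ ∃ h, IsSphereCritical (marginGrad (Fk f κ) M.S M.w M.Γ) h (√ψ * s) ∧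
      ⟪M.w, M.S h⟫ = c₁ ∧ ‖perpProj M.w (M.S h)‖ = c₂ := by
  have hβ : 0 ≤ c₂⁻¹ * d2F f κ c₁ c₂ :=
    mul_nonneg (inv_nonneg.2 hc₂.le) (hF.partialSnd_nonneg c₁ hc₂.le)
  have hσ : 0 < √ψ * s := by positivity
  have hpyth := fun h => norm_sq_eq_inner_sq_add_norm_perpProj_sq M.norm_w (M.S h)
  constructor
  · intro hsol
    obtain ⟨h, hh⟩ := M.exists_ae_eq_neg_div hβ hσ
      (M.Γ + (d1F f κ c₁ c₂ - c₁ * c₂⁻¹ * d2F f κ c₁ c₂) • M.w)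
    obtain ⟨hinner, hnormS, hnorm⟩ := (M.solSys_iff_of_ae_eq hh).1 hsol
    have hperp : ‖perpProj M.w (M.S h)‖ = c₂ := by
      rw [hpyth, hinner, add_right_inj] at hnormS
      exact (sq_eq_sq₀ (norm_nonneg _) hc₂.le).1 hnormS
    exact ⟨h, ⟨(pow_eq_one_iff_of_nonneg (norm_nonneg h) two_ne_zero).1 hnorm, hσ,
      (M.marginGrad_add_smul_eq_zero_iff hinner hperp hβ hσ).2 hh⟩, hinner, hperp⟩
  · rintro ⟨h, ⟨hnorm, -, hcrit⟩, hinner, hperp⟩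
    exact (M.solSys_iff_of_ae_eq
      ((M.marginGrad_add_smul_eq_zero_iff hinner hperp hβ hσ).1 hcrit)).2
        ⟨hinner, by rw [hpyth, hinner, hperp], by rw [hnorm, one_pow]⟩

end Translation

end L2Realization

end Realization

theorem statement_4_general (f : ℝ → ℝ) (hf : Measurable f) (hf01 : ∀ x, f x ∈ Icc (0 : ℝ) 1)
    (P : Measure Pt) (xmin xmax : ℝ) (hxmin : 0 < xmin)
    (hG2 : Integrable (fun q => Gc q ^ 2) P) (hW2 : ∫ q, Wc q ^ 2 ∂P = 1)
    (hX : ∀ᵐ q ∂P, Xc q ∈ Icc xmin xmax) (ψ κ : ℝ) (hψ : 0 < ψ) (hκ : 0 < κ)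
    (hB1 : CondB1 f P ψ) (hB2 : CondB2 f P ψ κ) (hB3 : CondB3 f P ψ κ) :
    ∃! t : ℝ × ℝ × ℝ, 0 < t.2.1 ∧ 0 < t.2.2 ∧ SolSys f P ψ κ t.1 t.2.1 t.2.2 := by
  have hF := isConvexProfile_Fk hf hf01 hκ
  have hsqrtψ := Real.sqrt_pos.2 hψ
  obtain ⟨M⟩ := nonempty_l2Realization hxmin hX hG2 hW2 ψ
  obtain ⟨⟨h, σ⟩, hcrit, huniq⟩ := existsUnique_isSphereCritical
    (convexOn_marginFun hF M.S M.w M.Γ) (hasGradientAt_marginFun hF M.inner_S_left M.w M.Γ)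
    (M.not_bddBelow_range_marginFun_of_condB1 hf hf01 hκ.le hB1)
  have hperp : 0 < ‖perpProj M.w (M.S h)‖ := norm_pos_iff.2 <|
    perpProj_ne_zero_of_isSphereCritical M.inner_S_left M.norm_w M.inner_w_Γ
      (M.off_axis_of_condB2_of_condB3 hF hB2 hB3) hcrit
  have hs : 0 < σ / √ψ := div_pos hcrit.2.1 hsqrtψ
  refine ⟨(⟪M.w, M.S h⟫, ‖perpProj M.w (M.S h)‖, σ / √ψ), ⟨hperp, hs, ?_⟩, ?_⟩
  · refine (M.solSys_iff_exists_isSphereCritical hF hψ hperp hs).2 ⟨h, ?_, rfl, rfl⟩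
    rwa [mul_div_cancel₀ σ hsqrtψ.ne']
  · rintro ⟨c₁, c₂, s⟩ ⟨hc₂, hs', hsol⟩
    obtain ⟨h', hcrit', rfl, rfl⟩ := (M.solSys_iff_exists_isSphereCritical hF hψ hc₂ hs').1 hsol
    obtain ⟨rfl, rfl⟩ := Prod.mk.inj (huniq (h', √ψ * s) hcrit')
    simp only [mul_div_cancel_left₀ s hsqrtψ.ne']

/-- Under (B1), (B2), (B3), the system of equations admits a unique solution
`(c₁,c₂,s) ∈ ℝ × (0,∞) × (0,∞)`. -/
theorem statement_4 (f : ℝ → ℝ) (hf : Continuous f) (hf01 : ∀ x, f x ∈ Set.Icc (0:ℝ) 1)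
    (hnd : NonDeg f)
    (P : Measure Pt) [IsProbabilityMeasure P]
    (xmin xmax : ℝ) (hxmin : 0 < xmin) (hxx : xmin ≤ xmax)
    (hG2 : Integrable (fun q => (Gc q) ^ 2) P)
    (hW2 : ∫ q, (Wc q) ^ 2 ∂P = 1)
    (hX : ∀ᵐ q ∂P, Xc q ∈ Set.Icc xmin xmax)
    (ψ κ : ℝ) (hψ : 0 < ψ) (hκ : 0 < κ)
    (hB1 : CondB1 f P ψ) (hB2 : CondB2 f P ψ κ) (hB3 : CondB3 f P ψ κ) :
    ∃! t : ℝ × ℝ × ℝ, 0 < t.2.1 ∧ 0 < t.2.2 ∧ SolSys f P ψ κ t.1 t.2.1 t.2.2 :=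
  statement_4_general f hf.measurable hf01 P xmin xmax hxmin hG2 hW2 hX ψ κ hψ hκ hB1 hB2 hB3

end MaxMargin
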